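/- Let ν be an arbitrary probability measure on 𝕋 and, for κ > 1/π, let ν_κ be its triangular-kernel regularization and U_{2,κ} the associated potential. Consider the generator L_{α,β,κ}f(x) := ½ f''(x) + α^{−1} ∫_𝕋 [f(x + αβ·⟨y−x⟩) − f(x)] ν_κ(y) λ(dy) and the Gibbs measure μ_{β,κ} with density exp(−βU_{2,κ})/Z_{β,κ} with respect to λ. Then there exists a universal constant C₁ > 0 such that for every β ≥ 1, every κ ≥ 1 and every α ∈ (0, min((2β)^{−1}, (β³(β+κ))^{−1/2})) there exists a bounded measurable function h : 𝕋 → ℝ with ∫_𝕋 L_{α,β,κ}φ dμ_{β,κ} = ∫_𝕋 φ·h dμ_{β,κ} for all φ ∈ C²(𝕋), and with ess sup_x |h(x)| ≤ C₁ αβ²(β² + κ²). -/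

import Mathlib

open MeasureTheory Real Set Filter

noncomputable section

instance : Fact (0 < 2 * π) := ⟨Real.two_pi_pos⟩

/-- The circle `𝕋 = ℝ/(2πℤ)`. -/
abbrev 𝕋 : Type := AddCircle (2 * π)

/-- The normalized Haar probability measure `λ` on the circle. -/
def lam : Measure 𝕋 := (ENNReal.ofReal (2 * π))⁻¹ • volume

/-- The representative of a point of the circle in `(-π, π]`. -/
def rep (z : 𝕋) : ℝ := ((AddCircle.equivIoc (2 * π) (-π) z : Set.Ioc (-π) (-π + 2 * π)) : ℝ)

/-- The triangular-kernel regularization of `ν`: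
`ν_κ(z) = 2πκ ∫ (1 - κ d(y,z))₊ ν(dy)`, a density w.r.t. `λ`. -/
def nuk (ν : Measure 𝕋) (κ : ℝ) (z : 𝕋) : ℝ := 2 * π * κ * ∫ y, max (1 - κ * dist y z) 0 ∂ν

/-- The regularized potential `U_{2,κ}(x) = ∫ d(x,y)² ν_κ(y) λ(dy)`. -/
def U2k (ν : Measure 𝕋) (κ : ℝ) (x : 𝕋) : ℝ := ∫ y, dist x y ^ 2 * nuk ν κ y ∂lam

/-- The normalizing constant `Z_{β,κ} = ∫ exp(-β U_{2,κ}) dλ`. -/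
def Z2k (ν : Measure 𝕋) (κ β : ℝ) : ℝ := ∫ x, Real.exp (-β * U2k ν κ x) ∂lam

/-- The Gibbs measure `μ_{β,κ}` with density `exp(-β U_{2,κ})/Z_{β,κ}` w.r.t. `λ`. -/
def gibbs2k (ν : Measure 𝕋) (κ β : ℝ) : Measure 𝕋 :=
  lam.withDensity fun x => ENNReal.ofReal (Real.exp (-β * U2k ν κ x) / Z2k ν κ β)

/-- The regularized generator for `p = 2`, acting on (the periodic lift) `φ` of a `C²` function:
`L_{α,β,κ}φ(x) = ½ φ''(x) + α⁻¹ ∫ [φ(x + αβ⟨y-x⟩) - φ(x)] ν_κ(y) λ(dy)`. -/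
def gen2k (ν : Measure 𝕋) (κ α β : ℝ) (φ : ℝ → ℝ) (z : 𝕋) : ℝ :=
  (1 / 2) * deriv (deriv φ) (rep z)
    + α⁻¹ * ∫ y, (φ (rep z + α * β * rep (y - z)) - φ (rep z)) * nuk ν κ y ∂lam

/-!
Lift everything to `ℝ`, write `g` for the lifted density, `m` for its mean signed displacement and
`a = αβ`. Then `U' = -2m` and `m' = g(· + π) - 1`, so Fubini and two integrations by parts give
`L*𝟙 = 2β²m² + β(g(x + π) - 1) + α⁻¹(∫ exp(-β(U(x - at) - U(x))) g(x + (1 - a)t) dt - 1)`.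
The backward jump law `g(x + (1 - a)t) dt` averages `g` over a period shortened by `aπ` at each end,
hence has mass `1 - a(g(x + π) - 1) + O(a²)`, while linearizing the exponential contributes
`-2βa m(m + O(a))`. The terms of order `a` cancel those of the diffusion, and the second-order
remainders divided by `α` are the claimed bound.
-/

/-- The law of the angle `rep z` of a `lam`-distributed point `z`: the uniform probability measure
on `(-π, π]`. It carries all averages over a period of functions on `ℝ`. -/
def angleMeasure : Measure ℝ := (ENNReal.ofReal (2 * π))⁻¹ • volume.restrict (Ioc (-π) π)

lemma integral_angleMeasure (f : ℝ → ℝ) :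
    ∫ t, f t ∂angleMeasure = (2 * π)⁻¹ * ∫ t in (-π)..π, f t := by
  rw [angleMeasure, integral_smul_measure, ENNReal.toReal_inv, ENNReal.toReal_ofReal two_pi_pos.le,
    intervalIntegral.integral_of_le (neg_le_self pi_pos.le), smul_eq_mul]

instance : IsProbabilityMeasure angleMeasure := by
  refine ⟨?_⟩
  rw [angleMeasure, Measure.smul_apply, Measure.restrict_apply_univ, Real.volume_Ioc,
    sub_neg_eq_add, ← two_mul, smul_eq_mul]
  exact ENNReal.inv_mul_cancel (by simp [pi_pos]) ENNReal.ofReal_ne_top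

lemma ae_angleMeasure_mem_Ioc : ∀ᵐ t ∂angleMeasure, t ∈ Ioc (-π) π :=
  Measure.ae_smul_measure (ae_restrict_mem measurableSet_Ioc) _

lemma integrable_angleMeasure {f : ℝ → ℝ} (hf : Continuous f) : Integrable f angleMeasure :=
  ((hf.integrableOn_Icc (a := -π) (b := π)).mono_set Ioc_subset_Icc_self).smul_measure
    (ENNReal.inv_ne_top.2 (by simp [pi_pos]))

lemma continuous_integral_angleMeasure {F : ℝ → ℝ → ℝ} (hF : Continuous (Function.uncurry F)) :
    Continuous fun x => ∫ t, F x t ∂angleMeasure := by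
  simp only [integral_angleMeasure]
  exact (intervalIntegral.continuous_parametric_intervalIntegral_of_continuous' hF _ _).const_mul _

lemma integral_angleMeasure_swap {F : ℝ → ℝ → ℝ} (hF : Continuous (Function.uncurry F)) :
    ∫ x, ∫ t, F x t ∂angleMeasure ∂angleMeasure = ∫ t, ∫ x, F x t ∂angleMeasure ∂angleMeasure := by
  refine integral_integral_swap ?_
  have hprod : IntegrableOn (Function.uncurry F) (Ioc (-π) π ×ˢ Ioc (-π) π) :=
    (hF.continuousOn.integrableOn_compact (isCompact_Icc.prod isCompact_Icc)).mono_set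
      (prod_mono Ioc_subset_Icc_self Ioc_subset_Icc_self)
  have hc : (ENNReal.ofReal (2 * π))⁻¹ ≠ ⊤ := ENNReal.inv_ne_top.2 (by simp [pi_pos])
  rw [angleMeasure, Measure.prod_smul_left, Measure.prod_smul_right, Measure.prod_restrict]
  exact (hprod.smul_measure hc).smul_measure hc

lemma abs_integral_mul_angleMeasure_le {f g : ℝ → ℝ} {C : ℝ} (hg : Integrable g angleMeasure)
    (hg0 : ∀ t, 0 ≤ g t) (hfC : ∀ t, |t| ≤ π → |f t| ≤ C) :
    |∫ t, f t * g t ∂angleMeasure| ≤ C * ∫ t, g t ∂angleMeasure := by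
  rw [← integral_const_mul, ← Real.norm_eq_abs]
  refine norm_integral_le_of_norm_le (hg.const_mul C) ?_
  filter_upwards [ae_angleMeasure_mem_Ioc] with t ht
  rw [Real.norm_eq_abs, abs_mul, abs_of_nonneg (hg0 t)]
  exact mul_le_mul_of_nonneg_right (hfC t (abs_le.2 ⟨ht.1.le, ht.2⟩)) (hg0 t)

lemma apply_sub_pi_of_periodic {f : ℝ → ℝ} (hf : Function.Periodic f (2 * π)) (x : ℝ) :
    f (x - π) = f (x + π) := by
  rw [← hf (x - π)]
  congr 1
  ring

lemma integral_comp_add_of_periodic {f : ℝ → ℝ} (hf : Function.Periodic f (2 * π)) (c : ℝ) :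
    ∫ t, f (t + c) ∂angleMeasure = ∫ t, f t ∂angleMeasure := by
  have hshift := hf.intervalIntegral_add_eq (-π + c) (-π)
  rw [show -π + c + 2 * π = π + c by ring, show -π + 2 * π = π by ring] at hshift
  rw [integral_angleMeasure, integral_angleMeasure, intervalIntegral.integral_comp_add_right,
    hshift]

lemma integral_mul_deriv_of_periodic {u v u' v' : ℝ → ℝ} (hu : ∀ x, HasDerivAt u (u' x) x)
    (hv : ∀ x, HasDerivAt v (v' x) x) (hu' : Continuous u') (hv' : Continuous v')
    (hup : Function.Periodic u (2 * π)) (hvp : Function.Periodic v (2 * π)) :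
    ∫ x, u x * v' x ∂angleMeasure = -∫ x, u' x * v x ∂angleMeasure := by
  have hends : u π * v π = u (-π) * v (-π) := by
    simpa using (apply_sub_pi_of_periodic (hup.mul hvp) 0).symm
  rw [integral_angleMeasure, integral_angleMeasure,
    intervalIntegral.integral_mul_deriv_eq_deriv_mul (fun x _ => hu x) (fun x _ => hv x)
      (hu'.intervalIntegrable _ _) (hv'.intervalIntegrable _ _), hends]
  ring

lemma hasDerivAt_integral_mul_comp_add {ψ ψ' g : ℝ → ℝ} (hψ : ∀ t, HasDerivAt ψ (ψ' t) t)
    (hψ' : Continuous ψ') (hg : Continuous g) (a b x : ℝ) :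
    HasDerivAt (fun x => ∫ t in a..b, ψ t * g (x + t))
      (ψ b * g (x + b) - ψ a * g (x + a) - ∫ t in a..b, ψ' t * g (x + t)) x := by
  set G : ℝ → ℝ := fun x => ∫ w in (0 : ℝ)..x, g w
  have hG : ∀ y, HasDerivAt G (g y) y := fun y => hg.integral_hasStrictDerivAt 0 y |>.hasDerivAt
  have hGc : Continuous G := continuous_iff_continuousAt.2 fun y => (hG y).continuousAt
  have hparts : ∀ y, ∫ t in a..b, ψ t * g (y + t)
      = ψ b * G (y + b) - ψ a * G (y + a) - ∫ t in a..b, ψ' t * G (y + t) := fun y =>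
    intervalIntegral.integral_mul_deriv_eq_deriv_mul (fun t _ => hψ t)
      (fun t _ => (hG (y + t)).comp_const_add y t) (hψ'.intervalIntegrable _ _)
      (Continuous.intervalIntegrable (by fun_prop) _ _)
  obtain ⟨C, hC⟩ := ((isCompact_closedBall x 1).prod (isCompact_uIcc (a := a) (b := b)))
    |>.exists_bound_of_continuousOn (f := fun p : ℝ × ℝ => ψ' p.2 * g (p.1 + p.2)) (by fun_prop)
  have hinner : HasDerivAt (fun y => ∫ t in a..b, ψ' t * G (y + t))
      (∫ t in a..b, ψ' t * g (x + t)) x := by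
    refine (intervalIntegral.hasDerivAt_integral_of_dominated_loc_of_deriv_le
      (F' := fun y t => ψ' t * g (y + t)) (bound := fun _ => C) (Metric.ball_mem_nhds x one_pos)
      (.of_forall fun y => Continuous.aestronglyMeasurable (by fun_prop))
      (Continuous.intervalIntegrable (by fun_prop) _ _)
      (Continuous.aestronglyMeasurable (by fun_prop))
      (.of_forall fun t ht y hy => hC (y, t) ⟨Metric.ball_subset_closedBall hy,
        uIoc_subset_uIcc ht⟩)
      intervalIntegrable_const
      (.of_forall fun t _ y _ => ((hG (y + t)).comp_add_const y t).const_mul _)).2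
  rw [funext hparts]
  exact ((((hG (x + b)).comp_add_const x b).const_mul _).sub
    (((hG (x + a)).comp_add_const x a).const_mul _)).sub hinner

lemma abs_sub_sub_mul_le_of_abs_deriv_sub_le {f f' : ℝ → ℝ} {K : ℝ}
    (hf : ∀ x, HasDerivAt f (f' x) x) (hf' : ∀ x y, |f' y - f' x| ≤ K * |y - x|) (x s : ℝ) :
    |f (x + s) - f x - s * f' x| ≤ K * s ^ 2 := by
  have hK : 0 ≤ K := by simpa using (abs_nonneg _).trans (hf' 0 1)
  have hmvt := (convex_uIcc (0 : ℝ) s).norm_image_sub_le_of_norm_hasDerivWithin_le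
    (f := fun r => f (x + r) - r * f' x) (f' := fun r => f' (x + r) - f' x) (C := K * |s|)
    (fun r _ => ((((hf (x + r)).comp_const_add x r).sub
      ((hasDerivAt_id r).mul_const (f' x))).congr_deriv (by ring)).hasDerivWithinAt)
    (fun r hr => (hf' x (x + r)).trans (by
      have hrs := abs_sub_left_of_mem_uIcc hr
      rw [sub_zero, sub_zero] at hrs
      rw [add_sub_cancel_left]
      gcongr)) left_mem_uIcc right_mem_uIcc
  simp only [Real.norm_eq_abs, add_zero, zero_mul, sub_zero] at hmvt
  calc |f (x + s) - f x - s * f' x| = |f (x + s) - s * f' x - f x| := by congr 1; ring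
    _ ≤ K * |s| * |s| := hmvt
    _ = K * s ^ 2 := by rw [mul_assoc, abs_mul_abs_self, sq]

lemma abs_exp_sub_one_sub_le (τ : ℝ) : |exp τ - 1 - τ| ≤ τ ^ 2 * exp |τ| := by
  have hbound := Complex.norm_exp_sub_sum_le_norm_mul_exp (τ : ℂ) 2
  simp only [Finset.sum_range_succ, Finset.sum_range_zero, Nat.factorial, pow_zero, pow_one,
    Complex.norm_real, Real.norm_eq_abs, sq_abs] at hbound
  rw [← Real.norm_eq_abs, ← Complex.norm_real]
  convert hbound using 2
  push_cast
  ring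

lemma integral_mul_integral_comp_add {g ρ φ : ℝ → ℝ} (hg : Function.Periodic g (2 * π))
    (hgc : Continuous g) (hρ : Function.Periodic ρ (2 * π)) (hρc : Continuous ρ)
    (hφ : Function.Periodic φ (2 * π)) (hφc : Continuous φ) (a : ℝ) :
    ∫ x, ρ x * ∫ t, φ (x + a * t) * g (x + t) ∂angleMeasure ∂angleMeasure
      = ∫ x, φ x * ∫ t, ρ (x - a * t) * g (x + (1 - a) * t) ∂angleMeasure ∂angleMeasure := by
  simp only [← integral_const_mul]
  rw [integral_angleMeasure_swap (F := fun x t => ρ x * (φ (x + a * t) * g (x + t)))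
      (by fun_prop),
    integral_angleMeasure_swap (F := fun x t => φ x * (ρ (x - a * t) * g (x + (1 - a) * t)))
      (by fun_prop)]
  congr 1
  funext t
  have hper : Function.Periodic (fun x => φ x * (ρ (x - a * t) * g (x + (1 - a) * t))) (2 * π) :=
    hφ.mul ((hρ.sub_const (a * t)).mul (hg.add_const ((1 - a) * t)))
  rw [← integral_comp_add_of_periodic hper (a * t)]
  congr 1
  funext x
  rw [add_sub_cancel_right, show x + a * t + (1 - a) * t = x + t by ring]
  ring

lemma abs_intervalIntegral_sub_mul_le_of_lipschitzWith {f : ℝ → ℝ} {L : NNReal}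
    (hf : LipschitzWith L f) {c r : ℝ} (hr : 0 ≤ r) :
    |(∫ t in (c - r)..(c + r), f t) - 2 * r * f c| ≤ 2 * r ^ 2 * L := by
  have hconst : ∫ _t in (c - r)..(c + r), f c = 2 * r * f c := by
    rw [intervalIntegral.integral_const, smul_eq_mul]
    ring
  rw [← hconst, ← intervalIntegral.integral_sub (hf.continuous.intervalIntegrable _ _)
    intervalIntegrable_const, ← Real.norm_eq_abs]
  calc ‖∫ t in (c - r)..(c + r), (f t - f c)‖ ≤ L * r * |c + r - (c - r)| := by
        refine intervalIntegral.norm_integral_le_of_norm_le_const fun t ht => ?_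
        rw [uIoc_of_le (by linarith)] at ht
        refine (hf.norm_sub_le t c).trans (mul_le_mul_of_nonneg_left ?_ L.coe_nonneg)
        exact abs_sub_le_iff.2 ⟨by linarith [ht.2], by linarith [ht.1]⟩
    _ = 2 * r ^ 2 * L := by
        rw [abs_of_nonneg (by linarith)]
        ring

lemma abs_mul_integral_comp_mul_sub_integral_le {f : ℝ → ℝ} (hf : Continuous f) {C a : ℝ}
    (hfC : ∀ t, |t| ≤ π → |f t| ≤ C) (ha0 : 0 ≤ a) (ha1 : a ≤ 1) :
    |(1 - a) * ∫ t, f ((1 - a) * t) ∂angleMeasure - ∫ t, f t ∂angleMeasure| ≤ a * C := by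
  have hi : ∀ u v, IntervalIntegrable f volume u v := hf.intervalIntegrable
  have hscale : (1 - a) * ∫ t in (-π)..π, f ((1 - a) * t)
      = ∫ t in ((1 - a) * -π)..((1 - a) * π), f t :=
    intervalIntegral.mul_integral_comp_mul_left ..
  have hsplit := intervalIntegral.integral_interval_sub_interval_comm
    (hi ((1 - a) * -π) ((1 - a) * π)) (hi (-π) π) (hi ((1 - a) * -π) (-π))
  have haπ := mul_nonneg ha0 pi_pos.le
  have haπ' := mul_le_mul_of_nonneg_right ha1 pi_pos.le
  have hend : ∀ u v, |u| ≤ π → |v| ≤ π → |u - v| = a * π → |∫ t in u..v, f t| ≤ C * (a * π) :=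
    fun u v hu hv huv => by
      rw [← huv, abs_sub_comm]
      exact intervalIntegral.norm_integral_le_of_norm_le_const (f := f) fun t ht =>
        hfC t <| abs_le.2 <| ordConnected_Icc.uIcc_subset (abs_le.1 hu) (abs_le.1 hv)
          (uIoc_subset_uIcc ht)
  have hleft := hend ((1 - a) * -π) (-π) (abs_le.2 ⟨by linarith, by linarith⟩)
    (abs_le.2 ⟨by linarith, by linarith⟩) (by rw [abs_of_nonneg] <;> linarith)
  have hright := hend ((1 - a) * π) π (abs_le.2 ⟨by linarith, by linarith⟩)
    (abs_le.2 ⟨by linarith, by linarith⟩) (by rw [abs_of_nonpos] <;> linarith)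
  rw [integral_angleMeasure, integral_angleMeasure, mul_left_comm, hscale, ← mul_sub, hsplit,
    abs_mul, abs_of_pos (inv_pos.2 two_pi_pos), inv_mul_le_iff₀ two_pi_pos]
  calc _ ≤ C * (a * π) + C * (a * π) := (abs_sub _ _).trans (add_le_add hleft hright)
    _ = 2 * π * (a * C) := by ring

lemma pi_sq_le_ten : π ^ 2 ≤ 10 := by
  nlinarith [pi_pos, pi_lt_d2]

/-- The lift to `ℝ` of a continuous probability density on the circle with respect to `lam`. -/
structure IsPeriodicDensity (g : ℝ → ℝ) : Prop where
  continuous : Continuous g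
  periodic : Function.Periodic g (2 * π)
  nonneg : ∀ x, 0 ≤ g x
  integral_eq_one : ∫ t, g t ∂angleMeasure = 1

/-- The mean signed displacement `∫ ⟨y - x⟩ g(y) λ(dy)` from `x` to a point of density `g`. -/
def meanDisplacement (g : ℝ → ℝ) (x : ℝ) : ℝ := ∫ t, t * g (x + t) ∂angleMeasure

/-- The quadratic potential `U(x) = ∫ d(x,y)² g(y) λ(dy)` of the density `g`. -/
def potential (g : ℝ → ℝ) (x : ℝ) : ℝ := ∫ t, t ^ 2 * g (x + t) ∂angleMeasure

/-- The unnormalized Gibbs density `exp(-βU)`. -/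
def gibbsWeight (g : ℝ → ℝ) (β x : ℝ) : ℝ := exp (-β * potential g x)

/-- The generator `½ φ''(x) + α⁻¹ ∫ [φ(x + αβ⟨y - x⟩) - φ(x)] g(y) λ(dy)` on periodic lifts, with
`y` parametrized by `t = ⟨y - x⟩`. -/
def generator (g : ℝ → ℝ) (α β : ℝ) (φ : ℝ → ℝ) (x : ℝ) : ℝ :=
  (1 / 2) * deriv (deriv φ) x
    + α⁻¹ * ∫ t, (φ (x + α * β * t) - φ x) * g (x + t) ∂angleMeasure

/-- The image of `𝟙` under the adjoint of `generator g α β` in `L²(exp(-βU) dλ)`: the first two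
terms are `½ exp(βU) (exp(-βU))''`, the last one is the adjoint of the jump part. -/
def adjointOne (g : ℝ → ℝ) (α β x : ℝ) : ℝ :=
  2 * β ^ 2 * meanDisplacement g x ^ 2 + β * (g (x + π) - 1)
    + α⁻¹ * ((∫ t, exp (-β * (potential g (x - α * β * t) - potential g x))
      * g (x + (1 - α * β) * t) ∂angleMeasure) - 1)

-- The three summands are the errors of replacing the jump law `g (x + (1 - αβ) t)` by
-- `1 - αβ (g (x + π) - 1)`, its mean by `meanDisplacement g x`, and `exp` by its linearization.
lemma mul_adjointOne_eq (g : ℝ → ℝ) {α : ℝ} (hα : α ≠ 0) (β x : ℝ) :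
    α * adjointOne g α β x
      = ((∫ t, g (x + (1 - α * β) * t) ∂angleMeasure) - 1 + α * β * (g (x + π) - 1))
        - 2 * β * (α * β) * meanDisplacement g x
          * ((∫ t, t * g (x + (1 - α * β) * t) ∂angleMeasure) - meanDisplacement g x)
        + ((∫ t, exp (-β * (potential g (x - α * β * t) - potential g x))
            * g (x + (1 - α * β) * t) ∂angleMeasure)
          - ((∫ t, g (x + (1 - α * β) * t) ∂angleMeasure)
            - 2 * β * (α * β) * meanDisplacement g x
              * ∫ t, t * g (x + (1 - α * β) * t) ∂angleMeasure)) := by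
  rw [adjointOne, mul_add, mul_inv_cancel_left₀ hα]
  ring

namespace IsPeriodicDensity

variable {g : ℝ → ℝ} (hg : IsPeriodicDensity g)

include hg

lemma integral_comp_add_left (x : ℝ) : ∫ t, g (x + t) ∂angleMeasure = 1 := by
  simp only [add_comm x, integral_comp_add_of_periodic hg.periodic, hg.integral_eq_one]

lemma periodic_integral_mul_comp_add (ψ : ℝ → ℝ) :
    Function.Periodic (fun x => ∫ t, ψ t * g (x + t) ∂angleMeasure) (2 * π) := fun x => by
  simp only [add_right_comm x, hg.periodic _]

lemma hasDerivAt_meanDisplacement (x : ℝ) :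
    HasDerivAt (meanDisplacement g) (g (x + π) - 1) x := by
  have hmean := hg.integral_comp_add_left x
  rw [integral_angleMeasure] at hmean
  have hdef : meanDisplacement g = fun x => (2 * π)⁻¹ * ∫ t in (-π)..π, t * g (x + t) :=
    funext fun x => integral_angleMeasure _
  rw [hdef]
  refine ((hasDerivAt_integral_mul_comp_add hasDerivAt_id continuous_const hg.continuous
    (-π) π x).const_mul (2 * π)⁻¹).congr_deriv ?_
  simp only [id, one_mul, mul_sub, hmean, ← sub_eq_add_neg, apply_sub_pi_of_periodic hg.periodic]
  field_simp
  ring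

lemma hasDerivAt_potential (x : ℝ) :
    HasDerivAt (potential g) (-2 * meanDisplacement g x) x := by
  have hdef : potential g = fun x => (2 * π)⁻¹ * ∫ t in (-π)..π, t ^ 2 * g (x + t) :=
    funext fun x => integral_angleMeasure _
  rw [hdef, meanDisplacement, integral_angleMeasure]
  refine ((hasDerivAt_integral_mul_comp_add (fun t => hasDerivAt_pow 2 t) (by fun_prop)
    hg.continuous (-π) π x).const_mul (2 * π)⁻¹).congr_deriv ?_
  simp only [Nat.cast_ofNat, Nat.add_one_sub_one, pow_one, mul_assoc,
    intervalIntegral.integral_const_mul, ← sub_eq_add_neg, apply_sub_pi_of_periodic hg.periodic]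
  ring

lemma continuous_meanDisplacement : Continuous (meanDisplacement g) :=
  continuous_iff_continuousAt.2 fun x => (hg.hasDerivAt_meanDisplacement x).continuousAt

lemma continuous_potential : Continuous (potential g) :=
  continuous_iff_continuousAt.2 fun x => (hg.hasDerivAt_potential x).continuousAt

lemma continuous_adjointOne (α β : ℝ) : Continuous (adjointOne g α β) := by
  have hgc := hg.continuous
  have hmc := hg.continuous_meanDisplacement
  have hUc := hg.continuous_potential
  have hjump : Continuous fun x => ∫ t, exp (-β * (potential g (x - α * β * t) - potential g x))
      * g (x + (1 - α * β) * t) ∂angleMeasure :=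
    continuous_integral_angleMeasure (by fun_prop)
  unfold adjointOne
  fun_prop

lemma hasDerivAt_gibbsWeight (β x : ℝ) :
    HasDerivAt (gibbsWeight g β) (2 * β * meanDisplacement g x * gibbsWeight g β x) x :=
  ((hg.hasDerivAt_potential x).const_mul (-β)).exp.congr_deriv (by rw [gibbsWeight]; ring)

lemma continuous_gibbsWeight (β : ℝ) : Continuous (gibbsWeight g β) :=
  continuous_iff_continuousAt.2 fun x => (hg.hasDerivAt_gibbsWeight β x).continuousAt

lemma periodic_gibbsWeight (β : ℝ) : Function.Periodic (gibbsWeight g β) (2 * π) :=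
  (hg.periodic_integral_mul_comp_add (· ^ 2)).comp fun u => exp (-β * u)

lemma integral_gibbsWeight_mul_deriv_deriv (β : ℝ) {φ : ℝ → ℝ} (hφ : Function.Periodic φ (2 * π))
    (hφ2 : ContDiff ℝ 2 φ) :
    ∫ x, gibbsWeight g β x * deriv (deriv φ) x ∂angleMeasure
      = ∫ x, gibbsWeight g β x *
        (φ x * (4 * β ^ 2 * meanDisplacement g x ^ 2 + 2 * β * (g (x + π) - 1))) ∂angleMeasure := by
  have hgc := hg.continuous
  have hmc := hg.continuous_meanDisplacement
  have hwc := hg.continuous_gibbsWeight β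
  have hφ1 : ContDiff ℝ 1 (deriv φ) := ((contDiff_succ_iff_deriv (n := 1)).1 hφ2).2.2
  have hφ'p : Function.Periodic (deriv φ) (2 * π) := fun x => by
    rw [← deriv_comp_add_const, hφ.funext]
  have hφ' : ∀ x, HasDerivAt φ (deriv φ x) x := fun x =>
    (hφ2.differentiable two_ne_zero x).hasDerivAt
  have hφ'' : ∀ x, HasDerivAt (deriv φ) (deriv (deriv φ) x) x := fun x =>
    (hφ1.differentiable one_ne_zero x).hasDerivAt
  have hw'p : Function.Periodic
      (fun x => 2 * β * meanDisplacement g x * gibbsWeight g β x) (2 * π) := fun x => by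
    simp only [hg.periodic_gibbsWeight β x, meanDisplacement,
      hg.periodic_integral_mul_comp_add (fun t => t) x]
  have hw'' : ∀ x, HasDerivAt (fun x => 2 * β * meanDisplacement g x * gibbsWeight g β x)
      ((4 * β ^ 2 * meanDisplacement g x ^ 2 + 2 * β * (g (x + π) - 1)) * gibbsWeight g β x) x :=
    fun x => (((hg.hasDerivAt_meanDisplacement x).const_mul (2 * β)).mul
      (hg.hasDerivAt_gibbsWeight β x)).congr_deriv (by ring)
  rw [integral_mul_deriv_of_periodic (hg.hasDerivAt_gibbsWeight β) hφ'' (by fun_prop)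
      (hφ1.continuous_deriv le_rfl) (hg.periodic_gibbsWeight β) hφ'p,
    integral_mul_deriv_of_periodic hw'' hφ' (by fun_prop) hφ1.continuous hw'p hφ, neg_neg]
  congr 1
  funext x
  ring

lemma integral_sub_mul_comp_add {φ : ℝ → ℝ} (hφ : Continuous φ) (a x : ℝ) :
    ∫ t, (φ (x + a * t) - φ x) * g (x + t) ∂angleMeasure
      = (∫ t, φ (x + a * t) * g (x + t) ∂angleMeasure) - φ x := by
  have hgc := hg.continuous
  simp only [sub_mul]
  rw [integral_sub (integrable_angleMeasure (by fun_prop)) (integrable_angleMeasure (by fun_prop)),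
    integral_const_mul, hg.integral_comp_add_left, mul_one]

lemma integral_gibbsWeight_mul_jump (a β : ℝ) {φ : ℝ → ℝ} (hφ : Function.Periodic φ (2 * π))
    (hφc : Continuous φ) :
    ∫ x, gibbsWeight g β x * ∫ t, (φ (x + a * t) - φ x) * g (x + t) ∂angleMeasure ∂angleMeasure
      = ∫ x, gibbsWeight g β x * (φ x * ((∫ t, exp (-β * (potential g (x - a * t) - potential g x))
        * g (x + (1 - a) * t) ∂angleMeasure) - 1)) ∂angleMeasure := by
  have hgc := hg.continuous
  have hwc := hg.continuous_gibbsWeight β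
  have hratio : ∀ x, gibbsWeight g β x * (φ x *
      ((∫ t, exp (-β * (potential g (x - a * t) - potential g x)) * g (x + (1 - a) * t)
        ∂angleMeasure) - 1))
      = φ x * (∫ t, gibbsWeight g β (x - a * t) * g (x + (1 - a) * t) ∂angleMeasure)
        - gibbsWeight g β x * φ x := fun x => by
    rw [mul_sub_one, mul_sub, mul_left_comm, ← integral_const_mul]
    congr 3
    funext t
    rw [← mul_assoc, gibbsWeight, ← exp_add, gibbsWeight]
    congr 2
    ring
  have hforward : Continuous fun x => ∫ t, φ (x + a * t) * g (x + t) ∂angleMeasure :=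
    continuous_integral_angleMeasure (by fun_prop)
  have hbackward : Continuous fun x => ∫ t, gibbsWeight g β (x - a * t) * g (x + (1 - a) * t)
      ∂angleMeasure := continuous_integral_angleMeasure (by fun_prop)
  simp only [hratio, hg.integral_sub_mul_comp_add hφc, mul_sub (gibbsWeight g β _)]
  rw [integral_sub (integrable_angleMeasure (by fun_prop)) (integrable_angleMeasure (by fun_prop)),
    integral_sub (integrable_angleMeasure (by fun_prop)) (integrable_angleMeasure (by fun_prop)),
    integral_mul_integral_comp_add hg.periodic hgc (hg.periodic_gibbsWeight β) hwc hφ hφc]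

theorem integral_gibbsWeight_mul_generator (α β : ℝ) {φ : ℝ → ℝ}
    (hφ : Function.Periodic φ (2 * π)) (hφ2 : ContDiff ℝ 2 φ) :
    ∫ x, gibbsWeight g β x * generator g α β φ x ∂angleMeasure
      = ∫ x, gibbsWeight g β x * (φ x * adjointOne g α β x) ∂angleMeasure := by
  have hgc := hg.continuous
  have hmc := hg.continuous_meanDisplacement
  have hUc := hg.continuous_potential
  have hwc := hg.continuous_gibbsWeight β
  have hφc := hφ2.continuous
  have hφ''c : Continuous (deriv (deriv φ)) :=
    ((contDiff_succ_iff_deriv (n := 1)).1 hφ2).2.2.continuous_deriv le_rfl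
  have hjump : Continuous fun x => ∫ t, (φ (x + α * β * t) - φ x) * g (x + t) ∂angleMeasure :=
    continuous_integral_angleMeasure (by fun_prop)
  have hjumpAdjoint : Continuous fun x =>
      ∫ t, exp (-β * (potential g (x - α * β * t) - potential g x)) * g (x + (1 - α * β) * t)
        ∂angleMeasure := continuous_integral_angleMeasure (by fun_prop)
  have hdiffusionTerm := hg.integral_gibbsWeight_mul_deriv_deriv β hφ hφ2
  have hjumpTerm := hg.integral_gibbsWeight_mul_jump (α * β) β hφ hφc
  calc ∫ x, gibbsWeight g β x * generator g α β φ x ∂angleMeasure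
      = (1 / 2) * (∫ x, gibbsWeight g β x * deriv (deriv φ) x ∂angleMeasure)
        + α⁻¹ * ∫ x, gibbsWeight g β x *
          ∫ t, (φ (x + α * β * t) - φ x) * g (x + t) ∂angleMeasure ∂angleMeasure := by
        rw [← integral_const_mul, ← integral_const_mul,
          ← integral_add
            (integrable_angleMeasure (by exact continuous_const.mul (hwc.mul hφ''c)))
            (integrable_angleMeasure (by fun_prop))]
        congr 1
        funext x
        rw [generator]
        ring
    _ = ∫ x, gibbsWeight g β x * (φ x * adjointOne g α β x) ∂angleMeasure := by
        rw [hdiffusionTerm, hjumpTerm, ← integral_const_mul, ← integral_const_mul,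
          ← integral_add (integrable_angleMeasure (by fun_prop))
            (integrable_angleMeasure (by fun_prop))]
        congr 1
        funext x
        rw [adjointOne]
        ring

lemma one_sub_mul_integral_comp_add_mul (a x : ℝ) :
    (1 - a) * ∫ t, g (x + (1 - a) * t) ∂angleMeasure
      = 1 - (2 * π)⁻¹ * ∫ t in (π - a * π)..(π + a * π), g (x + t) := by
  have hi : ∀ u v, IntervalIntegrable (fun t => g (x + t)) volume u v :=
    (hg.continuous.comp (continuous_const_add x)).intervalIntegrable
  have hscale : (1 - a) * ∫ t in (-π)..π, g (x + (1 - a) * t)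
      = ∫ t in ((1 - a) * -π)..((1 - a) * π), g (x + t) :=
    intervalIntegral.mul_integral_comp_mul_left (f := fun t => g (x + t)) ..
  have hperiod : ∫ t in ((1 - a) * -π)..(π + a * π), g (x + t) = ∫ t in (-π)..π, g (x + t) := by
    convert (hg.periodic.const_add x).intervalIntegral_add_eq ((1 - a) * -π) (-π) using 2 <;> ring
  have hsplit := intervalIntegral.integral_add_adjacent_intervals
    (hi ((1 - a) * -π) (π - a * π)) (hi (π - a * π) (π + a * π))
  have hmean := hg.integral_comp_add_left x
  rw [integral_angleMeasure, ← hperiod, ← hsplit] at hmean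
  rw [integral_angleMeasure, mul_left_comm, hscale, show (1 - a) * π = π - a * π by ring]
  linear_combination hmean

lemma integral_comp_add_mul_le_two {a : ℝ} (ha0 : 0 ≤ a) (ha : a ≤ 1 / 2) (x : ℝ) :
    ∫ t, g (x + (1 - a) * t) ∂angleMeasure ≤ 2 := by
  have hwindow : 0 ≤ ∫ t in (π - a * π)..(π + a * π), g (x + t) :=
    intervalIntegral.integral_nonneg (by linarith [mul_nonneg ha0 pi_pos.le])
      fun t _ => hg.nonneg _
  have hscaled : (1 - a) * ∫ t, g (x + (1 - a) * t) ∂angleMeasure ≤ 1 := by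
    rw [hg.one_sub_mul_integral_comp_add_mul]
    exact sub_le_self _ (mul_nonneg (inv_pos.2 two_pi_pos).le hwindow)
  have hnonneg : 0 ≤ ∫ t, g (x + (1 - a) * t) ∂angleMeasure :=
    integral_nonneg fun t => hg.nonneg _
  nlinarith

lemma abs_meanDisplacement_le (x : ℝ) : |meanDisplacement g x| ≤ π := by
  have hgc := hg.continuous
  simpa only [meanDisplacement, hg.integral_comp_add_left, mul_one] using
    abs_integral_mul_angleMeasure_le (f := fun t => t)
      (integrable_angleMeasure (f := fun t => g (x + t)) (by fun_prop))
      (fun t => hg.nonneg _) fun t => id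

section Bounded

variable {M : ℝ} (hM : ∀ x, g x ≤ M)

include hM

lemma one_le_of_le : 1 ≤ M := by
  simpa only [hg.integral_eq_one, integral_const, probReal_univ, one_smul] using
    integral_mono (integrable_angleMeasure hg.continuous) (integrable_const M) hM

lemma abs_sub_one_le (x : ℝ) : |g x - 1| ≤ M :=
  abs_le.2 ⟨by linarith [hg.nonneg x, hg.one_le_of_le hM], by linarith [hM x]⟩

lemma abs_meanDisplacement_sub_le (x y : ℝ) :
    |meanDisplacement g y - meanDisplacement g x| ≤ M * |y - x| :=
  convex_univ.norm_image_sub_le_of_norm_hasDerivWithin_le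
    (fun x _ => (hg.hasDerivAt_meanDisplacement x).hasDerivWithinAt)
    (fun x _ => hg.abs_sub_one_le hM (x + π)) (mem_univ x) (mem_univ y)

lemma abs_potential_add_sub_le (x s : ℝ) :
    |potential g (x + s) - potential g x + 2 * s * meanDisplacement g x| ≤ 2 * M * s ^ 2 := by
  convert abs_sub_sub_mul_le_of_abs_deriv_sub_le hg.hasDerivAt_potential (K := 2 * M)
    (fun x y => ?_) x s using 2
  · ring
  · rw [← mul_sub, abs_mul, abs_neg, abs_two, mul_assoc]
    exact mul_le_mul_of_nonneg_left (hg.abs_meanDisplacement_sub_le hM x y) two_pos.le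

lemma abs_integral_comp_add_mul_sub_one_le {L : NNReal} (hL : LipschitzWith L g) {a : ℝ}
    (ha0 : 0 ≤ a) (ha : a ≤ 1 / 2) (x : ℝ) :
    |(∫ t, g (x + (1 - a) * t) ∂angleMeasure) - 1 + a * (g (x + π) - 1)|
      ≤ 2 * a ^ 2 * (π * L + M) := by
  have hidentity := hg.one_sub_mul_integral_comp_add_mul a x
  set A := ∫ t, g (x + (1 - a) * t) ∂angleMeasure
  set W := ∫ t in (π - a * π)..(π + a * π), g (x + t)
  have hLx : LipschitzWith L fun t => g (x + t) :=
    (mul_one L) ▸ hL.comp (isometry_add_left x).lipschitz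
  have hW : |(2 * π)⁻¹ * W - a * g (x + π)| ≤ a ^ 2 * (π * L) := by
    have hwindow := abs_intervalIntegral_sub_mul_le_of_lipschitzWith hLx (c := π)
      (mul_nonneg ha0 pi_pos.le)
    rw [show (2 * π)⁻¹ * W - a * g (x + π) = (2 * π)⁻¹ * (W - 2 * (a * π) * g (x + π)) by
      field_simp, abs_mul, abs_of_pos (inv_pos.2 two_pi_pos), inv_mul_le_iff₀ two_pi_pos]
    exact hwindow.trans_eq (by ring)
  have hscaled : |(1 - a) * (A - 1 + a * (g (x + π) - 1))| ≤ a ^ 2 * (π * L + M) := by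
    rw [show (1 - a) * (A - 1 + a * (g (x + π) - 1))
      = -((2 * π)⁻¹ * W - a * g (x + π)) - a ^ 2 * (g (x + π) - 1) by linear_combination hidentity]
    refine (abs_sub _ _).trans ?_
    rw [abs_neg, abs_mul, abs_of_nonneg (sq_nonneg a), mul_add]
    exact add_le_add hW (mul_le_mul_of_nonneg_left (hg.abs_sub_one_le hM _) (sq_nonneg a))
  rw [abs_mul, abs_of_nonneg (by linarith)] at hscaled
  nlinarith [abs_nonneg (A - 1 + a * (g (x + π) - 1))]

lemma abs_integral_mul_comp_add_mul_sub_meanDisplacement_le {a : ℝ} (ha0 : 0 ≤ a)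
    (ha : a ≤ 1 / 2) (x : ℝ) :
    |(∫ t, t * g (x + (1 - a) * t) ∂angleMeasure) - meanDisplacement g x| ≤ 5 * π * M * a := by
  have hgc := hg.continuous
  have hbound : |∫ t, t * g (x + (1 - a) * t) ∂angleMeasure| ≤ π * 2 :=
    (abs_integral_mul_angleMeasure_le (integrable_angleMeasure (by fun_prop))
      (fun t => hg.nonneg _) fun t => id).trans
      (mul_le_mul_of_nonneg_left (hg.integral_comp_add_mul_le_two ha0 ha x) pi_pos.le)
  have hdilation := abs_mul_integral_comp_mul_sub_integral_le
    (f := fun t => t * g (x + t)) (C := π * M) (by fun_prop)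
    (fun t ht => by
      rw [abs_mul, abs_of_nonneg (hg.nonneg _)]
      exact mul_le_mul ht (hM _) (hg.nonneg _) pi_pos.le) ha0 (by linarith)
  simp only [mul_assoc (1 - a), integral_const_mul] at hdilation
  change |_ - meanDisplacement g x| ≤ _ at hdilation
  set B := ∫ t, t * g (x + (1 - a) * t) ∂angleMeasure
  calc |B - meanDisplacement g x|
      = |(1 - a) * ((1 - a) * B) - meanDisplacement g x + a * (2 - a) * B| := by congr 1; ring
    _ ≤ a * (π * M) + a * 2 * (π * 2) := by
        refine (abs_add_le _ _).trans (add_le_add hdilation ?_)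
        rw [abs_mul, abs_of_nonneg (mul_nonneg ha0 (by linarith))]
        gcongr
        linarith
    _ ≤ 5 * π * M * a := by
        nlinarith [mul_nonneg (mul_nonneg ha0 pi_pos.le) (sub_nonneg.2 (hg.one_le_of_le hM))]

lemma abs_mul_potential_sub_le {a β : ℝ} (hβ : 0 ≤ β) (x : ℝ) {t : ℝ} (ht : |t| ≤ π) :
    |-β * (potential g (x - a * t) - potential g x) + 2 * β * a * t * meanDisplacement g x|
      ≤ 20 * (a ^ 2 * β * M) := by
  have htaylor := hg.abs_potential_add_sub_le hM x (-(a * t))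
  rw [← sub_eq_add_neg] at htaylor
  have hM0 := zero_le_one.trans (hg.one_le_of_le hM)
  have ht2 : t ^ 2 ≤ 10 := (sq_le_sq' (abs_le.1 ht).1 (abs_le.1 ht).2).trans pi_sq_le_ten
  rw [show -β * (potential g (x - a * t) - potential g x) + 2 * β * a * t * meanDisplacement g x
      = -β * (potential g (x - a * t) - potential g x + 2 * -(a * t) * meanDisplacement g x) by
    ring, abs_mul, abs_neg, abs_of_nonneg hβ]
  calc _ ≤ β * (2 * M * (-(a * t)) ^ 2) := mul_le_mul_of_nonneg_left htaylor hβ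
    _ = 2 * (a ^ 2 * β * M) * t ^ 2 := by ring
    _ ≤ 2 * (a ^ 2 * β * M) * 10 := by gcongr
    _ = 20 * (a ^ 2 * β * M) := by ring

lemma abs_exp_potential_sub_le {a β : ℝ} (ha : 0 ≤ a) (hβ : 0 ≤ β)
    (hsmall : a ^ 2 * β * (β + M) ≤ 7) (x : ℝ) {t : ℝ} (ht : |t| ≤ π) :
    |exp (-β * (potential g (x - a * t) - potential g x))
        - (1 - 2 * β * a * t * meanDisplacement g x)|
      ≤ 5620 * exp 200 * (a ^ 2 * β * (β + M)) := by
  have hM0 := zero_le_one.trans (hg.one_le_of_le hM)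
  have hremainder := hg.abs_mul_potential_sub_le hM (a := a) hβ x ht
  have hlinear : |2 * β * a * t * meanDisplacement g x| ≤ 20 * (a * β) := by
    rw [mul_assoc (2 * β * a), abs_mul, abs_mul t, abs_of_nonneg (by positivity)]
    calc _ ≤ 2 * β * a * (π * π) := by
          gcongr
          exact hg.abs_meanDisplacement_le x
      _ = 2 * β * a * π ^ 2 := by ring
      _ ≤ 2 * β * a * 10 := by
          gcongr
          exact pi_sq_le_ten
      _ = 20 * (a * β) := by ring
  set τ := -β * (potential g (x - a * t) - potential g x)
  set l := 2 * β * a * t * meanDisplacement g x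
  set p := a * β
  set q := a ^ 2 * β * M
  have hp : 0 ≤ p := by positivity
  have hq : 0 ≤ q := by positivity
  have hpq : a ^ 2 * β * (β + M) = p ^ 2 + q := by ring
  rw [hpq] at hsmall ⊢
  have hτ : |τ| ≤ 20 * (p + q) := by
    calc |τ| = |(τ + l) - l| := by rw [add_sub_cancel_right]
      _ ≤ 20 * q + 20 * p := (abs_sub _ _).trans (add_le_add hremainder hlinear)
      _ = 20 * (p + q) := by ring
  have hτ200 : |τ| ≤ 200 := by nlinarith
  have hτsq : τ ^ 2 ≤ 5600 * (p ^ 2 + q) := by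
    calc τ ^ 2 = |τ| ^ 2 := (sq_abs τ).symm
      _ ≤ (20 * (p + q)) ^ 2 := pow_le_pow_left₀ (abs_nonneg τ) hτ 2
      _ ≤ 5600 * (p ^ 2 + q) := by nlinarith [sq_nonneg (p - q)]
  calc |exp τ - (1 - l)| = |(exp τ - 1 - τ) + (τ + l)| := by congr 1; ring
    _ ≤ τ ^ 2 * exp |τ| + 20 * q :=
      (abs_add_le _ _).trans (add_le_add (abs_exp_sub_one_sub_le τ) hremainder)
    _ ≤ 5600 * (p ^ 2 + q) * exp 200 + 20 * (p ^ 2 + q) * exp 200 := by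
      refine add_le_add (by gcongr) ?_
      calc 20 * q ≤ 20 * (p ^ 2 + q) * 1 := by linarith [sq_nonneg p]
        _ ≤ 20 * (p ^ 2 + q) * exp 200 := by gcongr; exact one_le_exp (by norm_num)
    _ = 5620 * exp 200 * (p ^ 2 + q) := by ring

lemma abs_integral_exp_potential_sub_le {a β : ℝ} (ha0 : 0 ≤ a) (ha : a ≤ 1 / 2) (hβ : 0 ≤ β)
    (hsmall : a ^ 2 * β * (β + M) ≤ 7) (x : ℝ) :
    |(∫ t, exp (-β * (potential g (x - a * t) - potential g x)) * g (x + (1 - a) * t)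
          ∂angleMeasure)
        - ((∫ t, g (x + (1 - a) * t) ∂angleMeasure)
          - 2 * β * a * meanDisplacement g x * ∫ t, t * g (x + (1 - a) * t) ∂angleMeasure)|
      ≤ 11240 * exp 200 * (a ^ 2 * β * (β + M)) := by
  have hgc := hg.continuous
  have hUc := hg.continuous_potential
  have hM0 := zero_le_one.trans (hg.one_le_of_le hM)
  have hexpand := abs_integral_mul_angleMeasure_le
    (integrable_angleMeasure (f := fun t => g (x + (1 - a) * t)) (by fun_prop))
    (fun t => hg.nonneg _) fun t ht => hg.abs_exp_potential_sub_le hM ha0 hβ hsmall x ht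
  rw [← integral_const_mul, ← integral_sub (integrable_angleMeasure (by fun_prop))
    (integrable_angleMeasure (by fun_prop)), ← integral_sub (integrable_angleMeasure (by fun_prop))
    (integrable_angleMeasure (by fun_prop))]
  calc _ = |∫ t, (exp (-β * (potential g (x - a * t) - potential g x))
        - (1 - 2 * β * a * t * meanDisplacement g x)) * g (x + (1 - a) * t) ∂angleMeasure| := by
        congr 2
        funext t
        ring
    _ ≤ 5620 * exp 200 * (a ^ 2 * β * (β + M)) * 2 := hexpand.trans
        (mul_le_mul_of_nonneg_left (hg.integral_comp_add_mul_le_two ha0 ha x) (by positivity))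
    _ = 11240 * exp 200 * (a ^ 2 * β * (β + M)) := by ring

lemma abs_meanDisplacement_mul_sub_le {a β : ℝ} (ha0 : 0 ≤ a) (ha : a ≤ 1 / 2) (hβ : 0 ≤ β)
    (x : ℝ) :
    |2 * β * a * meanDisplacement g x
        * ((∫ t, t * g (x + (1 - a) * t) ∂angleMeasure) - meanDisplacement g x)|
      ≤ 100 * (a ^ 2 * β * M) := by
  have hM0 := zero_le_one.trans (hg.one_le_of_le hM)
  have hm := hg.abs_meanDisplacement_le x
  have hmean := hg.abs_integral_mul_comp_add_mul_sub_meanDisplacement_le hM ha0 ha x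
  rw [abs_mul, abs_mul, abs_of_nonneg (by positivity)]
  calc _ ≤ 2 * β * a * π * (5 * π * M * a) := by gcongr
    _ = 10 * (a ^ 2 * β * M) * π ^ 2 := by ring
    _ ≤ 10 * (a ^ 2 * β * M) * 10 := by
      gcongr
      exact pi_sq_le_ten
    _ = 100 * (a ^ 2 * β * M) := by ring

theorem abs_adjointOne_le {L : NNReal} (hL : LipschitzWith L g) {α β : ℝ} (hα : 0 < α)
    (hβ : 0 ≤ β) (hαβ : α * β ≤ 1 / 2) (hsmall : (α * β) ^ 2 * β * (β + M) ≤ 7) (x : ℝ) :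
    |adjointOne g α β x| ≤ 12000 * exp 200 * (α * β ^ 2 * (β ^ 2 + β * M + L + M)) := by
  have hM0 := zero_le_one.trans (hg.one_le_of_le hM)
  have hL0 := L.coe_nonneg
  have ha0 : 0 ≤ α * β := by positivity
  have hwindow := hg.abs_integral_comp_add_mul_sub_one_le hM hL ha0 hαβ x
  have hdrift := hg.abs_meanDisplacement_mul_sub_le hM ha0 hαβ hβ x
  have hexp := hg.abs_integral_exp_potential_sub_le hM ha0 hαβ hβ hsmall x
  have hnumeric : 2 * (π * L + M) + 100 * (β * M) + 11240 * exp 200 * (β * (β + M))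
      ≤ 12000 * exp 200 * (β ^ 2 + β * M + L + M) := by
    have hβM := mul_nonneg hβ hM0
    have hexp200 : 1 ≤ exp 200 := one_le_exp (by norm_num)
    nlinarith [mul_le_mul_of_nonneg_right pi_lt_d2.le hL0,
      mul_le_mul_of_nonneg_right hexp200 (add_nonneg hβM (add_nonneg hL0 hM0)),
      mul_nonneg (sq_nonneg β) (exp_pos 200).le]
  refine le_of_mul_le_mul_left ?_ hα
  calc α * |adjointOne g α β x|
      ≤ 2 * (α * β) ^ 2 * (π * L + M) + 100 * ((α * β) ^ 2 * β * M)
          + 11240 * exp 200 * ((α * β) ^ 2 * β * (β + M)) := by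
        rw [← abs_of_pos hα, ← abs_mul, abs_of_pos hα, mul_adjointOne_eq g hα.ne']
        exact (abs_add_le _ _).trans
          (add_le_add ((abs_sub _ _).trans (add_le_add hwindow hdrift)) hexp)
    _ = (α * β) ^ 2 * (2 * (π * L + M) + 100 * (β * M) + 11240 * exp 200 * (β * (β + M))) := by
        ring
    _ ≤ (α * β) ^ 2 * (12000 * exp 200 * (β ^ 2 + β * M + L + M)) :=
        mul_le_mul_of_nonneg_left hnumeric (sq_nonneg _)
    _ = α * (12000 * exp 200 * (α * β ^ 2 * (β ^ 2 + β * M + L + M))) := by ring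

end Bounded

end IsPeriodicDensity

lemma rep_coe {t : ℝ} (ht : t ∈ Ioc (-π) π) : rep (t : 𝕋) = t :=
  AddCircle.equivIoc_coe_of_mem (p := 2 * π) (a := -π) ⟨ht.1, by linarith [ht.2]⟩

lemma coe_rep (z : 𝕋) : (rep z : 𝕋) = z := AddCircle.coe_equivIoc

lemma measurable_rep : Measurable rep :=
  measurable_subtype_coe.comp (AddCircle.measurableEquivIoc (2 * π) (-π)).measurable

lemma dist_eq_abs_rep (x y : 𝕋) : dist x y = |rep (y - x)| := by
  have hrep := (AddCircle.equivIoc (2 * π) (-π) (y - x)).2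
  have habs : |rep (y - x)| ≤ |2 * π| / 2 := by
    rw [abs_of_pos two_pi_pos, mul_div_cancel_left₀ π two_ne_zero]
    exact abs_le.2 ⟨hrep.1.le, hrep.2.trans_eq (by ring)⟩
  rw [dist_comm, dist_eq_norm, ← (AddCircle.norm_coe_eq_abs_iff _ two_pi_pos.ne').2 habs, coe_rep]

lemma lipschitzWith_coe_circle : LipschitzWith 1 ((↑) : ℝ → 𝕋) :=
  LipschitzWith.mk_one fun x y => by
    rw [dist_eq_norm, ← AddCircle.coe_sub, dist_eq_norm]
    exact QuotientAddGroup.norm_mk_le_norm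

instance : IsFiniteMeasure lam :=
  ⟨ENNReal.mul_lt_top (ENNReal.inv_lt_top.2 (by simp [pi_pos])) (measure_lt_top _ _)⟩

lemma integral_lam (f : 𝕋 → ℝ) : ∫ z, f z ∂lam = ∫ t : ℝ, f t ∂angleMeasure := by
  rw [integral_angleMeasure, lam, integral_smul_measure, ENNReal.toReal_inv,
    ENNReal.toReal_ofReal two_pi_pos.le, ← AddCircle.intervalIntegral_preimage (2 * π) (-π) f,
    show -π + 2 * π = π by ring, smul_eq_mul]

lemma integral_lam_rep_sub (F : ℝ → 𝕋 → ℝ) (z : 𝕋) :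
    ∫ y, F (rep (y - z)) y ∂lam = ∫ t : ℝ, F t (z + t) ∂angleMeasure := by
  have hshift : ∫ y, F (rep (y - z)) y ∂lam = ∫ y, F (rep y) (z + y) ∂lam := by
    rw [lam, integral_smul_measure, integral_smul_measure,
      ← integral_add_left_eq_self (fun y => F (rep (y - z)) y) z]
    simp only [add_sub_cancel_left]
  rw [hshift, integral_lam]
  refine integral_congr_ae ?_
  filter_upwards [ae_angleMeasure_mem_Ioc] with t ht
  rw [rep_coe ht]

lemma isPeriodicDensity_comp_coe {p : 𝕋 → ℝ} (hp : Continuous p) (hp0 : ∀ z, 0 ≤ p z)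
    (hp1 : ∫ z, p z ∂lam = 1) : IsPeriodicDensity fun x : ℝ => p x where
  continuous := hp.comp lipschitzWith_coe_circle.continuous
  periodic x := congrArg p (AddCircle.coe_add_period _ x)
  nonneg x := hp0 x
  integral_eq_one := by rw [← integral_lam, hp1]

lemma integral_triangle_angleMeasure {κ : ℝ} (hκ : π⁻¹ ≤ κ) :
    ∫ t, max (1 - κ * |t|) 0 ∂angleMeasure = (2 * π * κ)⁻¹ := by
  have hκ0 : 0 < κ := (inv_pos.2 pi_pos).trans_le hκ
  have hκπ : κ⁻¹ ≤ π := inv_le_of_inv_le₀ pi_pos hκ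
  have hi : ∀ u v, IntervalIntegrable (fun t => max (1 - κ * |t|) 0) volume u v :=
    Continuous.intervalIntegrable (by fun_prop)
  have hleft : ∫ t in (-π)..0, max (1 - κ * |t|) 0 = ∫ t in 0..π, max (1 - κ * |t|) 0 := by
    simpa only [abs_neg, neg_zero] using
      (intervalIntegral.integral_comp_neg (a := 0) (b := π) fun t => max (1 - κ * |t|) 0).symm
  have hslope : ∫ t in 0..κ⁻¹, max (1 - κ * |t|) 0 = κ⁻¹ / 2 := by
    calc ∫ t in 0..κ⁻¹, max (1 - κ * |t|) 0 = ∫ t in 0..κ⁻¹, (1 - κ * t) := by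
          refine intervalIntegral.integral_congr fun t ht => ?_
          rw [uIcc_of_le (inv_pos.2 hκ0).le] at ht
          have hκt : κ * t ≤ 1 := (le_inv_mul_iff₀ hκ0).1 (by rw [mul_one]; exact ht.2)
          simp only [abs_of_nonneg ht.1, max_eq_left (sub_nonneg.2 hκt)]
      _ = κ⁻¹ / 2 := by
          rw [intervalIntegral.integral_sub intervalIntegrable_const
            (Continuous.intervalIntegrable (by fun_prop) _ _),
            intervalIntegral.integral_const, intervalIntegral.integral_const_mul, integral_id]
          simp only [smul_eq_mul]
          field_simp
          ring
  have htail : ∫ t in κ⁻¹..π, max (1 - κ * |t|) 0 = 0 := by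
    refine intervalIntegral.integral_zero_ae (.of_forall fun t ht => ?_)
    rw [uIoc_of_le hκπ] at ht
    have hκt : 1 ≤ κ * t := (inv_mul_le_iff₀ hκ0).1 (by rw [mul_one]; exact ht.1.le)
    exact max_eq_right (sub_nonpos.2 (hκt.trans (mul_le_mul_of_nonneg_left (le_abs_self t) hκ0.le)))
  rw [integral_angleMeasure, ← intervalIntegral.integral_add_adjacent_intervals (hi _ 0) (hi 0 _),
    hleft, ← intervalIntegral.integral_add_adjacent_intervals (hi _ κ⁻¹) (hi κ⁻¹ _), hslope, htail]
  field_simp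
  ring

lemma integral_triangle_lam {κ : ℝ} (hκ : π⁻¹ ≤ κ) (y : 𝕋) :
    ∫ z, max (1 - κ * dist y z) 0 ∂lam = (2 * π * κ)⁻¹ := by
  simp only [dist_eq_abs_rep]
  rw [integral_lam_rep_sub (fun t _ => max (1 - κ * |t|) 0), integral_triangle_angleMeasure hκ]

section Regularization

variable (ν : Measure 𝕋)

lemma nuk_nonneg {κ : ℝ} (hκ : 0 ≤ κ) (z : 𝕋) : 0 ≤ nuk ν κ z :=
  mul_nonneg (by positivity) (integral_nonneg fun _ => le_max_right _ _)

variable [IsProbabilityMeasure ν]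

lemma integrable_triangle (κ : ℝ) (z : 𝕋) : Integrable (fun y => max (1 - κ * dist y z) 0) ν :=
  Continuous.integrable_of_hasCompactSupport (by fun_prop) (HasCompactSupport.of_compactSpace _)

lemma nuk_le {κ : ℝ} (hκ : 0 ≤ κ) (z : 𝕋) : nuk ν κ z ≤ 2 * π * κ := by
  have hle : ∫ y, max (1 - κ * dist y z) 0 ∂ν ≤ 1 := by
    simpa only [integral_const, probReal_univ, one_smul] using
      integral_mono (integrable_triangle ν κ z) (integrable_const (1 : ℝ)) fun y =>
        max_le (sub_le_self 1 (mul_nonneg hκ dist_nonneg)) zero_le_one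
  exact mul_le_of_le_one_right (by positivity) hle

lemma lipschitzWith_nuk {κ : ℝ} (hκ : 0 ≤ κ) :
    LipschitzWith (2 * π * κ ^ 2).toNNReal (nuk ν κ) := by
  refine LipschitzWith.of_dist_le_mul fun z w => ?_
  have hkernel : ∀ y, ‖max (1 - κ * dist y z) 0 - max (1 - κ * dist y w) 0‖ ≤ κ * dist z w :=
    fun y => (abs_max_sub_max_le_abs _ _ _).trans <| by
      rw [sub_sub_sub_cancel_left, ← mul_sub, abs_mul, abs_of_nonneg hκ, abs_sub_comm,
        dist_comm y, dist_comm y]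
      exact mul_le_mul_of_nonneg_left (abs_dist_sub_le z w y) hκ
  have hintegral := norm_integral_le_of_norm_le_const (μ := ν) (.of_forall hkernel)
  rw [probReal_univ, mul_one,
    integral_sub (integrable_triangle ν κ z) (integrable_triangle ν κ w)] at hintegral
  rw [Real.coe_toNNReal _ (by positivity), Real.dist_eq, nuk, nuk, ← mul_sub, abs_mul,
    abs_of_nonneg (by positivity)]
  calc _ ≤ 2 * π * κ * (κ * dist z w) := mul_le_mul_of_nonneg_left hintegral (by positivity)
    _ = 2 * π * κ ^ 2 * dist z w := by ring

lemma integral_nuk {κ : ℝ} (hκ : π⁻¹ ≤ κ) : ∫ z, nuk ν κ z ∂lam = 1 := by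
  have hκ0 : 0 < κ := (inv_pos.2 pi_pos).trans_le hκ
  simp only [nuk]
  rw [integral_const_mul, integral_integral_swap_of_hasCompactSupport (by fun_prop)
    (HasCompactSupport.of_compactSpace _)]
  simp only [integral_triangle_lam hκ, integral_const, probReal_univ, one_smul]
  exact mul_inv_cancel₀ (by positivity)

end Regularization

/-- The lift of the regularized density `ν_κ` to `ℝ`. -/
def nukLift (ν : Measure 𝕋) (κ x : ℝ) : ℝ := nuk ν κ x

lemma U2k_eq_potential (ν : Measure 𝕋) (κ : ℝ) (z : 𝕋) :
    U2k ν κ z = potential (nukLift ν κ) (rep z) := by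
  simp only [U2k, dist_eq_abs_rep, sq_abs]
  rw [integral_lam_rep_sub fun t y => t ^ 2 * nuk ν κ y]
  simp only [potential, nukLift, AddCircle.coe_add, coe_rep]

lemma gen2k_eq_generator (ν : Measure 𝕋) (κ α β : ℝ) (φ : ℝ → ℝ) (z : 𝕋) :
    gen2k ν κ α β φ z = generator (nukLift ν κ) α β φ (rep z) := by
  rw [gen2k, integral_lam_rep_sub fun t y => (φ (rep z + α * β * t) - φ (rep z)) * nuk ν κ y]
  simp only [generator, nukLift, AddCircle.coe_add, coe_rep]

section Gibbs

variable (ν : Measure 𝕋) [IsProbabilityMeasure ν] {κ : ℝ} (hκ : π⁻¹ ≤ κ)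

include hκ

lemma isPeriodicDensity_nukLift : IsPeriodicDensity (nukLift ν κ) :=
  have hκ0 : 0 ≤ κ := (inv_pos.2 pi_pos).le.trans hκ
  isPeriodicDensity_comp_coe (lipschitzWith_nuk ν hκ0).continuous (nuk_nonneg ν hκ0)
    (integral_nuk ν hκ)

lemma integral_gibbs2k_comp_rep (β : ℝ) (F : ℝ → ℝ) :
    ∫ z, F (rep z) ∂(gibbs2k ν κ β)
      = (Z2k ν κ β)⁻¹ * ∫ t, gibbsWeight (nukLift ν κ) β t * F t ∂angleMeasure := by
  have hU : Measurable (U2k ν κ) := by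
    rw [funext (U2k_eq_potential ν κ)]
    exact (isPeriodicDensity_nukLift ν hκ).continuous_potential.measurable.comp measurable_rep
  have hZ : 0 ≤ Z2k ν κ β := integral_nonneg fun _ => (exp_pos _).le
  rw [gibbs2k, integral_withDensity_eq_integral_toReal_smul (by fun_prop)
    (.of_forall fun _ => ENNReal.ofReal_lt_top), ← integral_const_mul, integral_lam]
  refine integral_congr_ae ?_
  filter_upwards [ae_angleMeasure_mem_Ioc] with t ht
  rw [ENNReal.toReal_ofReal (by positivity), U2k_eq_potential, rep_coe ht, smul_eq_mul, gibbsWeight]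
  ring

theorem integral_gen2k_gibbs2k (α β : ℝ) {φ : ℝ → ℝ} (hφ : Function.Periodic φ (2 * π))
    (hφ2 : ContDiff ℝ 2 φ) :
    ∫ z, gen2k ν κ α β φ z ∂(gibbs2k ν κ β)
      = ∫ z, φ (rep z) * adjointOne (nukLift ν κ) α β (rep z) ∂(gibbs2k ν κ β) := by
  simp only [gen2k_eq_generator]
  rw [integral_gibbs2k_comp_rep ν hκ β (generator (nukLift ν κ) α β φ),
    integral_gibbs2k_comp_rep ν hκ β fun t => φ t * adjointOne (nukLift ν κ) α β t,
    (isPeriodicDensity_nukLift ν hκ).integral_gibbsWeight_mul_generator α β hφ hφ2]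

theorem abs_adjointOne_nukLift_le {α β : ℝ} (hα : 0 < α) (hβ : 0 < β) (hαβ : α * β ≤ 1 / 2)
    (hsmall : α ^ 2 * (β ^ 3 * (β + κ)) ≤ 1) (x : ℝ) :
    |adjointOne (nukLift ν κ) α β x| ≤ 360000 * exp 200 * (α * β ^ 2 * (β ^ 2 + κ ^ 2)) := by
  have hκ0 : 0 < κ := (inv_pos.2 pi_pos).trans_le hκ
  have hLip : LipschitzWith (2 * π * κ ^ 2).toNNReal (nukLift ν κ) :=
    mul_one (2 * π * κ ^ 2).toNNReal ▸
      (lipschitzWith_nuk ν hκ0.le).comp lipschitzWith_coe_circle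
  have hsmall' : (α * β) ^ 2 * β * (β + 2 * π * κ) ≤ 7 := by
    calc (α * β) ^ 2 * β * (β + 2 * π * κ) ≤ (α * β) ^ 2 * β * (7 * (β + κ)) := by
          gcongr
          nlinarith [pi_lt_d2]
      _ = 7 * (α ^ 2 * (β ^ 3 * (β + κ))) := by ring
      _ ≤ 7 := by linarith
  have hscales : β ^ 2 + β * (2 * π * κ) + 2 * π * κ ^ 2 + 2 * π * κ ≤ 30 * (β ^ 2 + κ ^ 2) := by
    have hκπ : 1 ≤ κ * π := (inv_le_iff_one_le_mul₀ pi_pos).1 hκ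
    nlinarith [mul_le_mul_of_nonneg_left hκπ (by positivity : 0 ≤ 2 * π * κ),
      mul_le_mul_of_nonneg_right pi_sq_le_ten (sq_nonneg κ),
      mul_le_mul_of_nonneg_right pi_lt_d2.le (sq_nonneg κ),
      mul_le_mul_of_nonneg_right pi_lt_d2.le (mul_nonneg hβ.le hκ0.le), sq_nonneg (β - κ)]
  have hbound := (isPeriodicDensity_nukLift ν hκ).abs_adjointOne_le
    (fun x => nuk_le ν hκ0.le (x : 𝕋)) hLip hα hβ.le hαβ hsmall' x
  rw [Real.coe_toNNReal _ (by positivity)] at hbound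
  calc _ ≤ 12000 * exp 200 * (α * β ^ 2 * (30 * (β ^ 2 + κ ^ 2))) := hbound.trans (by gcongr)
    _ = 360000 * exp 200 * (α * β ^ 2 * (β ^ 2 + κ ^ 2)) := by ring

end Gibbs

lemma sq_mul_le_one_of_le_rpow_neg_half {a b : ℝ} (ha : 0 ≤ a) (hb : 0 < b)
    (hab : a ≤ b ^ (-(1 / 2) : ℝ)) : a ^ 2 * b ≤ 1 := by
  rw [rpow_neg hb.le, ← sqrt_eq_rpow, ← one_div, le_div_iff₀ (sqrt_pos.2 hb)] at hab
  calc a ^ 2 * b = (a * √b) ^ 2 := by rw [mul_pow, sq_sqrt hb.le]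
    _ ≤ 1 := pow_le_one₀ (by positivity) hab

lemma inv_pi_le_one : π⁻¹ ≤ 1 :=
  inv_le_one_of_one_le₀ (one_le_two.trans two_le_pi)

theorem adjoint_one_estimate_regularized_general :
    ∃ C₁ : ℝ, 0 < C₁ ∧
      ∀ (ν : Measure 𝕋), IsProbabilityMeasure ν →
      ∀ (β κ α : ℝ), 0 < β → π⁻¹ ≤ κ →
        0 < α → α < min ((2 * β)⁻¹) ((β ^ 3 * (β + κ)) ^ (-(1 / 2) : ℝ)) →
      ∃ h : 𝕋 → ℝ, Measurable h ∧
        (∀ᵐ x ∂lam, |h x| ≤ C₁ * (α * β ^ 2 * (β ^ 2 + κ ^ 2))) ∧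
        ∀ φ : ℝ → ℝ, Function.Periodic φ (2 * π) → ContDiff ℝ 2 φ →
          ∫ z, gen2k ν κ α β φ z ∂(gibbs2k ν κ β)
            = ∫ z, φ (rep z) * h z ∂(gibbs2k ν κ β) := by
  refine ⟨360000 * exp 200, by positivity, fun ν _ β κ α hβ hκ hα hlt => ?_⟩
  have hκ0 : 0 < κ := (inv_pos.2 pi_pos).trans_le hκ
  obtain ⟨hαβ, hαβκ⟩ := lt_min_iff.1 hlt
  have hjump : α * β ≤ 1 / 2 := by
    rw [← one_div, lt_div_iff₀ (by positivity)] at hαβ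
    linarith
  have hsmall : α ^ 2 * (β ^ 3 * (β + κ)) ≤ 1 :=
    sq_mul_le_one_of_le_rpow_neg_half hα.le (by positivity) hαβκ.le
  exact ⟨fun z => adjointOne (nukLift ν κ) α β (rep z),
    ((isPeriodicDensity_nukLift ν hκ).continuous_adjointOne α β).measurable.comp measurable_rep,
    .of_forall fun z => abs_adjointOne_nukLift_le ν hκ hα hβ hjump hsmall (rep z),
    fun _ hφ hφ2 => integral_gen2k_gibbs2k ν hκ α β hφ hφ2⟩

/-- Proposition `mbl4`: for an arbitrary probability measure `ν` on the circle,
there is a universal constant `C₁ > 0` such that for all `β ≥ 1`, `κ ≥ 1` and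
`0 < α < min((2β)⁻¹, (β³(β+κ))^{-1/2})`, the adjoint of `L_{α,β,κ}` in `L²(μ_{β,κ})` applied
to `𝟙` (i.e. the function `h` representing `φ ↦ ∫ L_{α,β,κ}φ dμ_{β,κ}`) satisfies
`ess sup |h| ≤ C₁ αβ²(β² + κ²)`. -/
theorem adjoint_one_estimate_regularized :
    ∃ C₁ : ℝ, 0 < C₁ ∧
      ∀ (ν : Measure 𝕋), IsProbabilityMeasure ν →
      ∀ (β κ α : ℝ), 1 ≤ β → 1 ≤ κ →
        0 < α → α < min ((2 * β)⁻¹) ((β ^ 3 * (β + κ)) ^ (-(1 / 2) : ℝ)) →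
      ∃ h : 𝕋 → ℝ, Measurable h ∧
        (∀ᵐ x ∂lam, |h x| ≤ C₁ * (α * β ^ 2 * (β ^ 2 + κ ^ 2))) ∧
        ∀ φ : ℝ → ℝ, Function.Periodic φ (2 * π) → ContDiff ℝ 2 φ →
          ∫ z, gen2k ν κ α β φ z ∂(gibbs2k ν κ β)
            = ∫ z, φ (rep z) * h z ∂(gibbs2k ν κ β) := by
  obtain ⟨C₁, hC₁, h⟩ := adjoint_one_estimate_regularized_general
  exact ⟨C₁, hC₁, fun ν hν β κ α hβ hκ => h ν hν β κ α (by linarith) (inv_pi_le_one.trans hκ)⟩
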